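/- (Proposition 2.3, uniqueness.) Assume in addition that ι(V) is dense in Ṽ. Then for every ε ∈ (0,1) the full AP system has at most one solution; equivalently, if (p, λ, q, l, μ) ∈ V × L × V × V × L solves the full AP system with ℓ = 0, then p = 0, q = 0, l = 0, λ = 0 and μ = 0. -/

import Mathlib

/-!
By linearity the difference of two solutions solves the system with `ℓ = 0`. Name its equations by
their hypotheses `h1`, ..., `h5` in `full_AP_system_homogeneous`, and let `G` be the `a∥`-isotropic
vectors of `V`, `A` their `c`-orthogonal, `G̃` the `ã`-isotropic vectors of `Ṽ`.

Cauchy–Schwarz and `Ṽ = G̃ ⊕ L` turn the constraints `h2`, `h5` into `p, l ∈ G`, and `h4` tested on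
`G` gives `q ∈ A`. Equation `h3` minus `ε` times `h1`, both tested with `l`, leaves `c(l, l) = 0`, so
`l ∈ G ∩ A = 0`. Then `h3` tested with `p + q` reads `a∥(p+q, p+q) + ε a⊥(p+q, p+q) = 0`, whence
`p + q = 0` by coercivity and `q = -p ∈ G ∩ A = 0`. Finally `h1` and `h4` say that `λ` and `μ` are
`ã`-orthogonal to the dense subspace `ι(V)`, so they lie in `G̃ ∩ L = 0`.
-/

/-- A continuous, symmetric, positive semidefinite bilinear form on a real
inner-product space. -/
def IsCSPForm {V : Type*} [NormedAddCommGroup V] [InnerProductSpace ℝ V]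
    (a : V →ₗ[ℝ] V →ₗ[ℝ] ℝ) : Prop :=
  (∀ x y : V, a x y = a y x) ∧ (∀ x : V, 0 ≤ a x x) ∧
    (∃ C : ℝ, ∀ x y : V, |a x y| ≤ C * ‖x‖ * ‖y‖)

/-- Degenerate Cauchy–Schwarz: an isotropic vector of a positive semidefinite form lies in its
kernel. -/
lemma IsCSPForm.apply_eq_zero {V : Type*} [NormedAddCommGroup V] [InnerProductSpace ℝ V]
    {a : V →ₗ[ℝ] V →ₗ[ℝ] ℝ} (ha : IsCSPForm a) {x : V} (hx : a x x = 0) (y : V) :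
    a x y = 0 := by
  by_contra hne
  -- `a (y + t x) (y + t x) = a y y + 2 t (a x y)`, and this `t` makes it equal to `-1`
  have h := ha.2.1 (y + (-(a y y + 1) / (2 * a x y)) • x)
  simp only [map_add, map_smul, LinearMap.add_apply, LinearMap.smul_apply, smul_eq_mul, hx,
    ha.1 y x, mul_zero, add_zero] at h
  have e : (-(a y y + 1) / (2 * a x y)) * a x y = -(a y y + 1) / 2 := by
    field_simp
  rw [e] at h
  linarith

lemma IsCSPForm.self_eq_zero_of_dense {V W : Type*} [NormedAddCommGroup W]
    [InnerProductSpace ℝ W] {a : W →ₗ[ℝ] W →ₗ[ℝ] ℝ} (ha : IsCSPForm a) {f : V → W}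
    (hf : DenseRange f) {w : W} (hw : ∀ x, a (f x) w = 0) : a w w = 0 := by
  obtain ⟨C, hC⟩ := ha.2.2
  have hcont : Continuous (a w) :=
    AddMonoidHomClass.continuous_of_bound (a w) (C * ‖w‖) fun u => hC w u
  have h : (fun u => a w u) = fun _ => 0 :=
    hf.equalizer hcont continuous_const (funext fun x => by
      simpa [ha.1 w (f x)] using hw x)
  exact congrFun h w

/-- If `u` is `a`-orthogonal to a complement `L` of the isotropic vectors, then `u` is isotropic. -/
lemma IsCSPForm.self_eq_zero_of_complement {W : Type*} [NormedAddCommGroup W]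
    [InnerProductSpace ℝ W] {a : W →ₗ[ℝ] W →ₗ[ℝ] ℝ} (ha : IsCSPForm a) {L : Submodule ℝ W}
    (hdecomp : ∀ u : W, ∃ g lam : W, a g g = 0 ∧ lam ∈ L ∧ u = g + lam)
    {u : W} (hu : ∀ κ ∈ L, a u κ = 0) : a u u = 0 := by
  obtain ⟨g, k, hg, hk, e⟩ := hdecomp u
  have h : a u (g + k) = 0 := by
    rw [map_add, hu k hk, ha.1 u g, ha.apply_eq_zero hg, add_zero]
  rwa [← e] at h

/-- The homogeneous system has only the trivial solution. -/
lemma full_AP_system_homogeneous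
    {V : Type*} [NormedAddCommGroup V] [InnerProductSpace ℝ V]
    {W : Type*} [NormedAddCommGroup W] [InnerProductSpace ℝ W]
    {apar aperp c : V →ₗ[ℝ] V →ₗ[ℝ] ℝ}
    (hapar : IsCSPForm apar) (haperp : IsCSPForm aperp) (hc : IsCSPForm c)
    {α : ℝ} (hα : 0 < α)
    (hcoer : ∀ φ : V, α * ‖φ‖ ^ 2 ≤ apar φ φ + aperp φ φ)
    {P : V →L[ℝ] V}
    (hPid : ∀ φ : V, apar φ φ = 0 → P φ = φ)
    (hPzero : ∀ φ : V, (∀ ψ : V, apar ψ ψ = 0 → c φ ψ = 0) → P φ = 0)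
    {ta : W →ₗ[ℝ] W →ₗ[ℝ] ℝ} (hta : IsCSPForm ta) {L : Submodule ℝ W}
    (hdecomp : ∀ u : W, ∃ g lam : W, ta g g = 0 ∧ lam ∈ L ∧ u = g + lam)
    (hinter : ∀ u : W, ta u u = 0 → u ∈ L → u = 0)
    {ι : V →L[ℝ] W}
    (hιa : ∀ φ ψ : V, ta (ι φ) (ι ψ) = apar φ ψ)
    (hdense : DenseRange ι)
    {ε : ℝ} (hε : 0 < ε)
    {p q l : V} {lam mu : W} (hlam : lam ∈ L) (hmu : mu ∈ L)
    (h1 : ∀ η : V, aperp p η + aperp q η + ta (ι η) lam = 0)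
    (h2 : ∀ κ ∈ L, ta (ι p) κ = 0)
    (h3 : ∀ ξ : V, apar q ξ + ε * aperp q ξ + ε * aperp p ξ + c l ξ = 0)
    (h4 : ∀ χ : V, c q χ + ta (ι χ) mu = 0)
    (h5 : ∀ τ ∈ L, ta (ι l) τ = 0) :
    p = 0 ∧ lam = 0 ∧ q = 0 ∧ l = 0 ∧ mu = 0 := by
  have hGA : ∀ φ : V, apar φ φ = 0 → (∀ ψ : V, apar ψ ψ = 0 → c φ ψ = 0) → φ = 0 :=
    fun φ hG hA => (hPid φ hG).symm.trans (hPzero φ hA)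
  have hp : apar p p = 0 := by
    rw [← hιa]; exact hta.self_eq_zero_of_complement hdecomp h2
  have hl : apar l l = 0 := by
    rw [← hιa]; exact hta.self_eq_zero_of_complement hdecomp h5
  have hq : ∀ ψ : V, apar ψ ψ = 0 → c q ψ = 0 := fun ψ hψ => by
    have h := h4 ψ
    rwa [hta.apply_eq_zero ((hιa ψ ψ).trans hψ), add_zero] at h
  have hcl : c l l = 0 := by
    have e1 := h1 l
    have e3 := h3 l
    rw [hta.apply_eq_zero ((hιa l l).trans hl)] at e1
    rw [hapar.1 q l, hapar.apply_eq_zero hl] at e3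
    linear_combination e3 - ε * e1
  have hl0 : l = 0 := hGA l hl fun ψ _ => hc.apply_eq_zero hcl ψ
  have hsum : apar (p + q) (p + q) + ε * aperp (p + q) (p + q) = 0 := by
    have e3 := h3 (p + q)
    simp only [hl0, map_add, map_zero, LinearMap.add_apply, LinearMap.zero_apply,
      hapar.1 q p, hapar.apply_eq_zero hp] at e3 ⊢
    linear_combination e3
  have hpar := hapar.2.1 (p + q)
  have hperp := haperp.2.1 (p + q)
  have hperp0 : aperp (p + q) (p + q) = 0 := by
    have := mul_nonneg hε.le hperp
    exact (mul_eq_zero.mp (by linarith)).resolve_left hε.ne'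
  have hpq : p + q = 0 := by
    have h := hcoer (p + q)
    rw [hperp0] at h hsum
    have h' : ‖p + q‖ ^ 2 ≤ 0 := by
      by_contra hlt
      have := mul_pos hα (not_le.mp hlt)
      linarith
    exact norm_eq_zero.mp (pow_eq_zero_iff two_ne_zero |>.mp (le_antisymm h' (sq_nonneg _)))
  have hqp : q = -p := eq_neg_of_add_eq_zero_right hpq
  have hq0 : q = 0 := hGA q (by simp [hqp, hp]) hq
  have hp0 : p = 0 := by simpa [hq0] using hpq
  refine ⟨hp0, hinter lam (hta.self_eq_zero_of_dense hdense fun η => ?_) hlam, hq0, hl0,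
    hinter mu (hta.self_eq_zero_of_dense hdense fun χ => ?_) hmu⟩
  · simpa [hp0, hq0] using h1 η
  · simpa [hq0] using h4 χ

/-- Proposition 2.3, uniqueness: assuming moreover that ι(V)
is dense in Ṽ, for every ε ∈ (0,1) the full AP system has at most one
solution. -/
theorem full_AP_system_uniqueness
    {V : Type*} [NormedAddCommGroup V] [InnerProductSpace ℝ V] [CompleteSpace V]
    {W : Type*} [NormedAddCommGroup W] [InnerProductSpace ℝ W] [CompleteSpace W]
    (apar aperp c : V →ₗ[ℝ] V →ₗ[ℝ] ℝ)
    (hapar : IsCSPForm apar) (haperp : IsCSPForm aperp) (hc : IsCSPForm c)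
    (α : ℝ) (hα : 0 < α)
    (hcoer : ∀ φ : V, α * ‖φ‖ ^ 2 ≤ apar φ φ + aperp φ φ)
    -- Hypothesis B: bounded projection P onto G along A, V = G ⊕ A
    (P : V →L[ℝ] V)
    (hPG : ∀ φ : V, apar (P φ) (P φ) = 0)
    (hPA : ∀ φ : V, ∀ ψ : V, apar ψ ψ = 0 → c (φ - P φ) ψ = 0)
    (hPid : ∀ φ : V, apar φ φ = 0 → P φ = φ)
    (hPzero : ∀ φ : V, (∀ ψ : V, apar ψ ψ = 0 → c φ ψ = 0) → P φ = 0)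
    (ell : V →L[ℝ] ℝ) (F₀ : ℝ) (hF₀ : 0 ≤ F₀)
    (hell : ∀ ψ : V, |ell ψ| ≤ F₀ * Real.sqrt (c ψ ψ))
    -- Lagrange-multiplier framework on Ṽ = W
    (ta : W →ₗ[ℝ] W →ₗ[ℝ] ℝ) (hta : IsCSPForm ta)
    (L : Submodule ℝ W) (hLclosed : IsClosed (L : Set W))
    -- Hypothesis B': Ṽ = G̃ ⊕ L
    (hdecomp : ∀ u : W, ∃ g lam : W, ta g g = 0 ∧ lam ∈ L ∧ u = g + lam)
    (hinter : ∀ u : W, ta u u = 0 → u ∈ L → u = 0)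
    -- Embedding ι : V → Ṽ, with dense range
    (ι : V →L[ℝ] W) (hι : Function.Injective ι)
    (hιa : ∀ φ ψ : V, ta (ι φ) (ι ψ) = apar φ ψ)
    (hdense : DenseRange ι)
    (ε : ℝ) (hε : ε ∈ Set.Ioo (0 : ℝ) 1)
    -- two solutions of the full AP system
    (p₁ q₁ l₁ : V) (lam₁ mu₁ : W) (hlam₁ : lam₁ ∈ L) (hmu₁ : mu₁ ∈ L)
    (h₁1 : ∀ η : V, aperp p₁ η + aperp q₁ η + ta (ι η) lam₁ = ell η)
    (h₁2 : ∀ κ ∈ L, ta (ι p₁) κ = 0)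
    (h₁3 : ∀ ξ : V, apar q₁ ξ + ε * aperp q₁ ξ + ε * aperp p₁ ξ + c l₁ ξ
      = ε * ell ξ)
    (h₁4 : ∀ χ : V, c q₁ χ + ta (ι χ) mu₁ = 0)
    (h₁5 : ∀ τ ∈ L, ta (ι l₁) τ = 0)
    (p₂ q₂ l₂ : V) (lam₂ mu₂ : W) (hlam₂ : lam₂ ∈ L) (hmu₂ : mu₂ ∈ L)
    (h₂1 : ∀ η : V, aperp p₂ η + aperp q₂ η + ta (ι η) lam₂ = ell η)
    (h₂2 : ∀ κ ∈ L, ta (ι p₂) κ = 0)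
    (h₂3 : ∀ ξ : V, apar q₂ ξ + ε * aperp q₂ ξ + ε * aperp p₂ ξ + c l₂ ξ
      = ε * ell ξ)
    (h₂4 : ∀ χ : V, c q₂ χ + ta (ι χ) mu₂ = 0)
    (h₂5 : ∀ τ ∈ L, ta (ι l₂) τ = 0) :
    p₁ = p₂ ∧ lam₁ = lam₂ ∧ q₁ = q₂ ∧ l₁ = l₂ ∧ mu₁ = mu₂ := by
  have h := full_AP_system_homogeneous (p := p₁ - p₂) (q := q₁ - q₂) (l := l₁ - l₂)
    (lam := lam₁ - lam₂) (mu := mu₁ - mu₂) hapar haperp hc hα hcoer hPid hPzero hta hdecomp hinter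
    hιa hdense hε.1 (L.sub_mem hlam₁ hlam₂) (L.sub_mem hmu₁ hmu₂)
    (fun η => by
      simp only [map_sub, LinearMap.sub_apply]
      linear_combination h₁1 η - h₂1 η)
    (fun κ hκ => by
      simp only [map_sub, LinearMap.sub_apply]
      linear_combination h₁2 κ hκ - h₂2 κ hκ)
    (fun ξ => by
      simp only [map_sub, LinearMap.sub_apply]
      linear_combination h₁3 ξ - h₂3 ξ)
    (fun χ => by
      simp only [map_sub, LinearMap.sub_apply]
      linear_combination h₁4 χ - h₂4 χ)
    (fun τ hτ => by
      simp only [map_sub, LinearMap.sub_apply]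
      linear_combination h₁5 τ hτ - h₂5 τ hτ)
  simpa only [sub_eq_zero] using h
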